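/- Let a > 4/15. The inequality ψ(x+1) < L(x,a) holds for all x ∈ (−1, ∞) if and only if a ≥ a₁ = (40 + 3√205)/105. Moreover, for every a ≥ a₁ and every x > 0, one has L(x,a) − c₀(a) < ψ(x+1) < L(x,a), where c₀(a) = L(0,a) + γ = (1/(90a²+2))·ln((3a+1)/3) + (45a²/(90a²+2))·ln((15a−1)/(45a)) + γ, and c₀(a) is the best (smallest) possible such constant. -/

import Mathlib

open Real Filter Set

/-- The digamma function ψ(x) = Γ'(x)/Γ(x), as the derivative of log ∘ Γ. -/
noncomputable def digamma (x : ℝ) : ℝ := deriv (fun y : ℝ => Real.log (Real.Gamma y)) x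

/-- L(x,a) = (1/(90a²+2))·ln(x²+x+(3a+1)/3) + (45a²/(90a²+2))·ln(x²+x+(15a−1)/(45a)). -/
noncomputable def L (x a : ℝ) : ℝ :=
  (1 / (90 * a ^ 2 + 2)) * Real.log (x ^ 2 + x + (3 * a + 1) / 3) +
    (45 * a ^ 2 / (90 * a ^ 2 + 2)) * Real.log (x ^ 2 + x + (15 * a - 1) / (45 * a))

/-- c₀(a) = L(0,a) + γ. -/
noncomputable def c₀ (a : ℝ) : ℝ := L 0 a + Real.eulerMascheroniConstant

/-!
The gap `g(x) = L(x,a) - ψ(x+1)` tends to `0` at infinity, and `ψ(x+2) - ψ(x+1) = 1/(x+1)` removes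
the digamma function from its forward difference. The derivative of `g(x+1) - g(x)` is then a
rational function of `u = (x+1)²`; the coefficients of `L` are chosen so that its numerator is only
affine in `u`, with positive constant term and a slope of the sign of `315a² - 240a - 7`.
If the slope is nonnegative, `g(x+1) - g(x)` increases on `(-1, ∞)`, hence `g` decreases to `0`
there, and its values on `(0, ∞)` lie between `0` and `g(0) = c₀(a)`. If the slope is
negative, the same argument applied to `-g` near infinity makes `g` eventually negative.
-/

open Topology

section ForwardDifference

lemma lt_of_tendsto_of_forall_add_one_lt {α : Type*} [TopologicalSpace α] [Preorder α]
    [OrderClosedTopology α] {f : ℝ → α} {l : α} (hf : Tendsto f atTop (𝓝 l)) {x₀ : ℝ}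
    (hstep : ∀ x, x₀ < x → f (x + 1) < f x) {x : ℝ} (hx : x₀ < x) : l < f x := by
  have hanti : StrictAnti fun n : ℕ => f (x + n) := by
    refine strictAnti_nat_of_succ_lt fun n => ?_
    rw [Nat.cast_succ, ← add_assoc]
    exact hstep _ (hx.trans_le (le_add_of_nonneg_right n.cast_nonneg))
  have hlim : Tendsto (fun n : ℕ => f (x + n)) atTop (𝓝 l) :=
    hf.comp (tendsto_atTop_add_const_left _ _ tendsto_natCast_atTop_atTop)
  calc l ≤ f (x + (1 : ℕ)) := hanti.antitone.le_of_tendsto hlim 1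
    _ < f x := by simpa only [Nat.cast_one] using hstep x hx

variable {f : ℝ → ℝ} {l x₀ : ℝ}

lemma strictAntiOn_Ioi_of_strictMonoOn_fwdDiff (hf : Tendsto f atTop (𝓝 l))
    (hmono : StrictMonoOn (fwdDiff 1 f) (Ioi x₀)) : StrictAntiOn f (Ioi x₀) := by
  intro x hx y _ hxy
  have hlim : Tendsto (fun z => f z - f (z + (y - x))) atTop (𝓝 0) := by
    simpa only [sub_self, Function.comp_def, id] using
      hf.sub (hf.comp (tendsto_atTop_add_const_right _ (y - x) tendsto_id))
  have hstep : ∀ z, x₀ < z → f (z + 1) - f (z + 1 + (y - x)) < f z - f (z + (y - x)) := by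
    intro z hz
    have hlt := hmono hz (hz.trans (by linarith : z < z + (y - x))) (by linarith)
    rw [fwdDiff, fwdDiff, add_right_comm] at hlt
    linarith
  have hpos := lt_of_tendsto_of_forall_add_one_lt hlim hstep hx
  rwa [add_sub_cancel, sub_pos] at hpos

lemma lt_of_tendsto_of_strictMonoOn_fwdDiff (hf : Tendsto f atTop (𝓝 l))
    (hmono : StrictMonoOn (fwdDiff 1 f) (Ioi x₀)) {x : ℝ} (hx : x₀ < x) : l < f x :=
  lt_of_tendsto_of_forall_add_one_lt hf
    (fun y hy => strictAntiOn_Ioi_of_strictMonoOn_fwdDiff hf hmono hy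
      (hy.trans (lt_add_one y)) (lt_add_one y)) hx

lemma lt_of_strictAntiOn_fwdDiff_of_tendsto (hf : Tendsto f atTop (𝓝 l))
    (hanti : StrictAntiOn (fwdDiff 1 f) (Ioi x₀)) {x : ℝ} (hx : x₀ < x) : f x < l := by
  refine neg_lt_neg_iff.1 (lt_of_tendsto_of_strictMonoOn_fwdDiff hf.neg (x₀ := x₀) ?_ hx)
  intro y hy z hz hyz
  have hlt := hanti hy hz hyz
  simp only [fwdDiff] at hlt ⊢
  linarith

end ForwardDifference

section Digamma

variable {x : ℝ}

lemma analyticAt_log_Gamma (hx : 0 < x) :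
    AnalyticAt ℝ (fun y : ℝ => Real.log (Real.Gamma y)) x := by
  have hdiff : DifferentiableOn ℂ Complex.Gamma {z | 0 < z.re} := by
    refine fun z hz => (Complex.differentiableAt_Gamma z fun m hm => ?_).differentiableWithinAt
    rw [mem_ofPred_eq, hm, Complex.neg_re, Complex.natCast_re, neg_pos] at hz
    exact hz.not_ge m.cast_nonneg
  have hopen : IsOpen {z : ℂ | 0 < z.re} := isOpen_lt continuous_const Complex.continuous_re
  have hGamma : AnalyticAt ℝ Real.Gamma x :=
    (hdiff.analyticAt (hopen.mem_nhds (by simpa using hx))).re_ofReal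
  exact hGamma.log (Real.Gamma_pos_of_pos hx)

lemma continuousAt_digamma (hx : 0 < x) : ContinuousAt digamma x :=
  (analyticAt_log_Gamma hx).deriv.continuousAt

lemma digamma_one : digamma 1 = -Real.eulerMascheroniConstant := by
  have h := Real.hasDerivAt_Gamma_one.log (by norm_num [Real.Gamma_one])
  simpa only [digamma, Real.Gamma_one, div_one] using h.deriv

lemma log_Gamma_add_one (hx : 0 < x) :
    Real.log (Real.Gamma (x + 1)) = Real.log (Real.Gamma x) + Real.log x := by
  rw [Real.Gamma_add_one hx.ne', Real.log_mul hx.ne' (Real.Gamma_pos_of_pos hx).ne', add_comm]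

lemma digamma_add_one (hx : 0 < x) : digamma (x + 1) = digamma x + x⁻¹ := by
  have hsum := (analyticAt_log_Gamma hx).differentiableAt.hasDerivAt.add
    (Real.hasDerivAt_log hx.ne')
  have heq : (fun y => Real.log (Real.Gamma (y + 1))) =ᶠ[𝓝 x]
      fun y => Real.log (Real.Gamma y) + Real.log y :=
    (lt_mem_nhds hx).mono fun _ => log_Gamma_add_one
  rw [digamma, ← deriv_comp_add_const]
  exact (hsum.congr_of_eventuallyEq heq).deriv

lemma slope_log_Gamma_add_one (hx : 0 < x) :
    slope (Real.log ∘ Real.Gamma) x (x + 1) = Real.log x := by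
  rw [slope_def_field, Function.comp_apply, Function.comp_apply, log_Gamma_add_one hx,
    add_sub_cancel_left, add_sub_cancel_left, div_one]

lemma digamma_le_log (hx : 0 < x) : digamma x ≤ Real.log x := by
  rw [← slope_log_Gamma_add_one hx]
  exact Real.convexOn_log_Gamma.deriv_le_slope hx (hx.trans (lt_add_one x)) (lt_add_one x)
    (analyticAt_log_Gamma hx).differentiableAt

lemma log_le_digamma_add_one (hx : 0 < x) : Real.log x ≤ digamma (x + 1) := by
  have hx' : 0 < x + 1 := hx.trans (lt_add_one x)
  rw [← slope_log_Gamma_add_one hx]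
  exact Real.convexOn_log_Gamma.slope_le_deriv hx hx' (lt_add_one x)
    (analyticAt_log_Gamma hx').differentiableAt

lemma tendsto_digamma_add_one_sub_log :
    Tendsto (fun x => digamma (x + 1) - Real.log x) atTop (𝓝 0) := by
  refine tendsto_of_tendsto_of_tendsto_of_le_of_le' tendsto_const_nhds tendsto_inv_atTop_zero ?_ ?_
  · filter_upwards [eventually_gt_atTop 0] with x hx
    exact sub_nonneg.2 (log_le_digamma_add_one hx)
  · filter_upwards [eventually_gt_atTop 0] with x hx
    linarith [digamma_le_log hx, digamma_add_one hx]

end Digamma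

section LogQuadratic

lemma tendsto_log_sub_log_of_tendsto_div {α : Type*} {F : Filter α} {f g : α → ℝ}
    (h : Tendsto (fun x => f x / g x) F (𝓝 1)) :
    Tendsto (fun x => Real.log (f x) - Real.log (g x)) F (𝓝 0) := by
  have hlog := h.log one_ne_zero
  rw [Real.log_one] at hlog
  refine hlog.congr' ?_
  filter_upwards [h.eventually_ne one_ne_zero] with x hx
  obtain ⟨hf, hg⟩ := div_ne_zero_iff.1 hx
  exact Real.log_div hf hg

lemma tendsto_log_quadratic_sub_two_mul_log (p : ℝ) :
    Tendsto (fun x => Real.log (x ^ 2 + x + p) - 2 * Real.log x) atTop (𝓝 0) := by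
  have hratio : Tendsto (fun x : ℝ => (x ^ 2 + x + p) / x ^ 2) atTop (𝓝 1) := by
    have hinv := tendsto_inv_atTop_zero (𝕜 := ℝ)
    have hsum : Tendsto (fun x : ℝ => 1 + x⁻¹ + p * x⁻¹ ^ 2) atTop (𝓝 1) := by
      simpa using (hinv.const_add 1).add ((hinv.pow 2).const_mul p)
    refine hsum.congr' ?_
    filter_upwards [eventually_ne_atTop 0] with x hx
    field_simp
  simpa only [Real.log_pow, Nat.cast_ofNat] using tendsto_log_sub_log_of_tendsto_div hratio

lemma quadratic_pos {p : ℝ} (hp : 1 / 4 < p) (x : ℝ) : 0 < x ^ 2 + x + p := by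
  linarith [sq_nonneg (x + 1 / 2)]

/-- The product `(x² + x + p)((x+1)² + (x+1) + p)` of two consecutive values of a quadratic,
which depends on `x` only through `u = (x+1)²`. -/
def consecutiveProduct (p u : ℝ) : ℝ := (u + p) ^ 2 - u

lemma consecutiveProduct_sq (p x : ℝ) :
    consecutiveProduct p ((x + 1) ^ 2) = (x ^ 2 + x + p) * ((x + 1) ^ 2 + (x + 1) + p) := by
  rw [consecutiveProduct]
  ring

lemma consecutiveProduct_pos {p : ℝ} (hp : 1 / 4 < p) (u : ℝ) : 0 < consecutiveProduct p u := by
  rw [consecutiveProduct]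
  linarith [sq_nonneg (u + p - 1 / 2)]

lemma eventually_consecutiveProduct_pos (p : ℝ) : ∀ᶠ u in atTop, 0 < consecutiveProduct p u := by
  filter_upwards [eventually_gt_atTop 0, eventually_gt_atTop (1 - 2 * p)] with u hu hup
  rw [consecutiveProduct]
  linarith [mul_pos hu (sub_pos.2 hup), sq_nonneg p]

lemma hasDerivAt_log_quadratic {p x : ℝ} (hx : x ^ 2 + x + p ≠ 0) :
    HasDerivAt (fun y => Real.log (y ^ 2 + y + p)) ((2 * x + 1) / (x ^ 2 + x + p)) x := by
  have hquad : HasDerivAt (fun y => y ^ 2 + y + p) (2 * x + 1) x := by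
    simpa using ((hasDerivAt_pow 2 x).add (hasDerivAt_id x)).add_const p
  exact hquad.log hx

lemma hasDerivAt_fwdDiff_log_quadratic {p x : ℝ} (hx : consecutiveProduct p ((x + 1) ^ 2) ≠ 0) :
    HasDerivAt (fwdDiff 1 fun y => Real.log (y ^ 2 + y + p))
      (2 * (p - (x + 1) ^ 2) / consecutiveProduct p ((x + 1) ^ 2)) x := by
  rw [consecutiveProduct_sq] at hx ⊢
  obtain ⟨hx₀, hx₁⟩ := mul_ne_zero_iff.1 hx
  refine (((hasDerivAt_log_quadratic hx₁).comp_add_const x 1).sub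
    (hasDerivAt_log_quadratic hx₀)).congr_deriv ?_
  rw [div_sub_div _ _ hx₁ hx₀, mul_comm (x ^ 2 + x + p)]
  congr 1
  ring

end LogQuadratic

section Gap

variable {a : ℝ}

/-- The error `L(x,a) - ψ(x+1)` of the logarithmic approximation to the digamma function. -/
noncomputable def digammaGap (a x : ℝ) : ℝ := L x a - digamma (x + 1)

lemma digammaGap_zero (a : ℝ) : digammaGap a 0 = c₀ a := by
  rw [digammaGap, c₀, zero_add, digamma_one, sub_neg_eq_add]

lemma tendsto_L_sub_log (a : ℝ) : Tendsto (fun x => L x a - Real.log x) atTop (𝓝 0) := by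
  have hsum := ((tendsto_log_quadratic_sub_two_mul_log ((3 * a + 1) / 3)).const_mul
    (1 / (90 * a ^ 2 + 2))).add
    ((tendsto_log_quadratic_sub_two_mul_log ((15 * a - 1) / (45 * a))).const_mul
      (45 * a ^ 2 / (90 * a ^ 2 + 2)))
  simp only [mul_zero, add_zero] at hsum
  refine hsum.congr fun x => ?_
  have hweights : 1 / (90 * a ^ 2 + 2) * 2 + 45 * a ^ 2 / (90 * a ^ 2 + 2) * 2 = 1 := by
    field_simp
    ring
  rw [L]
  linear_combination -Real.log x * hweights

lemma tendsto_digammaGap (a : ℝ) : Tendsto (fun x => digammaGap a x) atTop (𝓝 0) := by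
  simpa only [digammaGap, sub_sub_sub_cancel_right, sub_zero] using
    (tendsto_L_sub_log a).sub tendsto_digamma_add_one_sub_log

lemma fwdDiff_digammaGap {x : ℝ} (hx : -1 < x) :
    fwdDiff 1 (digammaGap a) x = fwdDiff 1 (fun y => L y a) x - (x + 1)⁻¹ := by
  simp only [fwdDiff, digammaGap]
  rw [digamma_add_one (neg_lt_iff_pos_add.1 hx)]
  ring

/-- The numerator, in terms of `u = (x+1)²`, of the derivative of the forward difference of
`digammaGap a`. -/
noncomputable def gapNumerator (a u : ℝ) : ℝ :=
  (315 * a ^ 2 - 240 * a - 7) / (2025 * a) * u + ((3 * a + 1) / 3 * ((15 * a - 1) / (45 * a))) ^ 2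

lemma partial_fractions_eq_gapNumerator_div {u : ℝ} (ha : a ≠ 0) (hu : u ≠ 0)
    (hp : consecutiveProduct ((3 * a + 1) / 3) u ≠ 0)
    (hq : consecutiveProduct ((15 * a - 1) / (45 * a)) u ≠ 0) :
    1 / (90 * a ^ 2 + 2) *
          (2 * ((3 * a + 1) / 3 - u) / consecutiveProduct ((3 * a + 1) / 3) u) +
        45 * a ^ 2 / (90 * a ^ 2 + 2) *
          (2 * ((15 * a - 1) / (45 * a) - u) / consecutiveProduct ((15 * a - 1) / (45 * a)) u) +
        u⁻¹ =
      gapNumerator a u / (u * consecutiveProduct ((3 * a + 1) / 3) u *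
        consecutiveProduct ((15 * a - 1) / (45 * a)) u) := by
  have hnum : 1 / (90 * a ^ 2 + 2) * (2 * ((3 * a + 1) / 3 - u)) * u *
          consecutiveProduct ((15 * a - 1) / (45 * a)) u +
        45 * a ^ 2 / (90 * a ^ 2 + 2) * (2 * ((15 * a - 1) / (45 * a) - u)) * u *
          consecutiveProduct ((3 * a + 1) / 3) u +
        consecutiveProduct ((3 * a + 1) / 3) u * consecutiveProduct ((15 * a - 1) / (45 * a)) u =
      gapNumerator a u := by
    simp only [consecutiveProduct, gapNumerator]
    field_simp
    ring
  rw [← hnum]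
  generalize consecutiveProduct ((3 * a + 1) / 3) u = P at *
  generalize consecutiveProduct ((15 * a - 1) / (45 * a)) u = Q at *
  field_simp

lemma hasDerivAt_fwdDiff_digammaGap {x : ℝ} (ha : a ≠ 0) (hx : -1 < x)
    (hp : consecutiveProduct ((3 * a + 1) / 3) ((x + 1) ^ 2) ≠ 0)
    (hq : consecutiveProduct ((15 * a - 1) / (45 * a)) ((x + 1) ^ 2) ≠ 0) :
    HasDerivAt (fwdDiff 1 (digammaGap a))
      (gapNumerator a ((x + 1) ^ 2) / ((x + 1) ^ 2 *
        consecutiveProduct ((3 * a + 1) / 3) ((x + 1) ^ 2) *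
        consecutiveProduct ((15 * a - 1) / (45 * a)) ((x + 1) ^ 2))) x := by
  have hx₁ : x + 1 ≠ 0 := (neg_lt_iff_pos_add.1 hx).ne'
  have hinv : HasDerivAt (fun y : ℝ => (y + 1)⁻¹) (-((x + 1) ^ 2)⁻¹) x :=
    (hasDerivAt_inv hx₁).comp_add_const x 1
  have hsum := (((hasDerivAt_fwdDiff_log_quadratic hp).const_mul (1 / (90 * a ^ 2 + 2))).add
    ((hasDerivAt_fwdDiff_log_quadratic hq).const_mul (45 * a ^ 2 / (90 * a ^ 2 + 2)))).sub hinv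
  rw [sub_neg_eq_add, partial_fractions_eq_gapNumerator_div ha (pow_ne_zero 2 hx₁) hp hq] at hsum
  refine hsum.congr_of_eventuallyEq ?_
  filter_upwards [lt_mem_nhds hx] with y hy
  rw [fwdDiff_digammaGap hy]
  simp only [fwdDiff, L, Pi.add_apply, Pi.sub_apply]
  ring

lemma one_div_four_lt_of_four_div_fifteen_lt (ha : 4 / 15 < a) :
    1 / 4 < (3 * a + 1) / 3 ∧ 1 / 4 < (15 * a - 1) / (45 * a) := by
  constructor
  · linarith
  · rw [lt_div_iff₀ (by linarith)]
    linarith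

lemma four_div_fifteen_lt_of_slope_nonneg (ha : 0 < a)
    (hslope : 0 ≤ 315 * a ^ 2 - 240 * a - 7) : 4 / 15 < a := by
  by_contra! hle
  linarith [mul_le_mul_of_nonneg_left hle ha.le]

lemma strictMonoOn_fwdDiff_digammaGap (ha : 0 < a) (hslope : 0 ≤ 315 * a ^ 2 - 240 * a - 7) :
    StrictMonoOn (fwdDiff 1 (digammaGap a)) (Ioi (-1)) := by
  obtain ⟨hp, hq⟩ := one_div_four_lt_of_four_div_fifteen_lt
    (four_div_fifteen_lt_of_slope_nonneg ha hslope)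
  have hderiv : ∀ x ∈ Ioi (-1 : ℝ), HasDerivAt (fwdDiff 1 (digammaGap a)) _ x := fun x hx =>
    hasDerivAt_fwdDiff_digammaGap ha.ne' hx (consecutiveProduct_pos hp _).ne'
      (consecutiveProduct_pos hq _).ne'
  refine strictMonoOn_of_deriv_pos (convex_Ioi _)
    (fun x hx => (hderiv x hx).continuousAt.continuousWithinAt) fun x hx => ?_
  rw [interior_Ioi] at hx
  rw [(hderiv x hx).deriv]
  have hx₁ : 0 < x + 1 := neg_lt_iff_pos_add.1 hx
  have hnum : 0 < gapNumerator a ((x + 1) ^ 2) :=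
    add_pos_of_nonneg_of_pos (by positivity)
      (pow_pos (mul_pos (by linarith : 0 < (3 * a + 1) / 3) (by linarith)) 2)
  exact div_pos hnum (mul_pos (mul_pos (pow_pos hx₁ 2) (consecutiveProduct_pos hp _))
    (consecutiveProduct_pos hq _))

lemma eventually_gapNumerator_neg (ha : 0 < a) (hslope : 315 * a ^ 2 - 240 * a - 7 < 0) :
    ∀ᶠ u in atTop, gapNumerator a u < 0 :=
  (tendsto_atBot_add_const_right _ _ (tendsto_id.const_mul_atTop_of_neg
    (div_neg_of_neg_of_pos hslope (by positivity)))).eventually_lt_atBot 0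

lemma exists_strictAntiOn_fwdDiff_digammaGap (ha : 0 < a)
    (hslope : 315 * a ^ 2 - 240 * a - 7 < 0) :
    ∃ T, StrictAntiOn (fwdDiff 1 (digammaGap a)) (Ioi T) := by
  have hsq : Tendsto (fun x : ℝ => (x + 1) ^ 2) atTop atTop :=
    (tendsto_pow_atTop two_ne_zero).comp (tendsto_atTop_add_const_right _ 1 tendsto_id)
  obtain ⟨T, hT⟩ := eventually_atTop.1 ((eventually_gt_atTop (-1)).and (hsq.eventually
    ((eventually_gapNumerator_neg ha hslope).and
      ((eventually_consecutiveProduct_pos ((3 * a + 1) / 3)).and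
        (eventually_consecutiveProduct_pos ((15 * a - 1) / (45 * a)))))))
  have hderiv : ∀ x ∈ Ioi T, HasDerivAt (fwdDiff 1 (digammaGap a)) _ x := fun x hx =>
    have ⟨hx₁, _, hp, hq⟩ := hT x (le_of_lt hx)
    hasDerivAt_fwdDiff_digammaGap ha.ne' hx₁ hp.ne' hq.ne'
  refine ⟨T, strictAntiOn_of_deriv_neg (convex_Ioi T)
    (fun x hx => (hderiv x hx).continuousAt.continuousWithinAt) fun x hx => ?_⟩
  rw [interior_Ioi] at hx
  rw [(hderiv x hx).deriv]
  obtain ⟨hx₁, hnum, hp, hq⟩ := hT x (le_of_lt hx)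
  exact div_neg_of_neg_of_pos hnum
    (mul_pos (mul_pos (pow_pos (neg_lt_iff_pos_add.1 hx₁) 2) hp) hq)

lemma digammaGap_pos (ha : 0 < a) (hslope : 0 ≤ 315 * a ^ 2 - 240 * a - 7) {x : ℝ}
    (hx : -1 < x) : 0 < digammaGap a x :=
  lt_of_tendsto_of_strictMonoOn_fwdDiff (tendsto_digammaGap a)
    (strictMonoOn_fwdDiff_digammaGap ha hslope) hx

lemma digammaGap_lt_c₀ (ha : 0 < a) (hslope : 0 ≤ 315 * a ^ 2 - 240 * a - 7) {x : ℝ}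
    (hx : 0 < x) : digammaGap a x < c₀ a := by
  rw [← digammaGap_zero]
  exact strictAntiOn_Ioi_of_strictMonoOn_fwdDiff (tendsto_digammaGap a)
    (strictMonoOn_fwdDiff_digammaGap ha hslope) (mem_Ioi.2 neg_one_lt_zero)
    (mem_Ioi.2 (neg_one_lt_zero.trans hx)) hx

lemma eventually_digammaGap_neg (ha : 0 < a) (hslope : 315 * a ^ 2 - 240 * a - 7 < 0) :
    ∀ᶠ x in atTop, digammaGap a x < 0 := by
  obtain ⟨T, hT⟩ := exists_strictAntiOn_fwdDiff_digammaGap ha hslope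
  exact (eventually_gt_atTop T).mono fun x =>
    lt_of_strictAntiOn_fwdDiff_of_tendsto (tendsto_digammaGap a) hT

lemma continuousAt_digammaGap {x : ℝ} (ha : 4 / 15 < a) (hx : -1 < x) :
    ContinuousAt (digammaGap a) x := by
  obtain ⟨hp, hq⟩ := one_div_four_lt_of_four_div_fifteen_lt ha
  have hL : ContinuousAt (fun y => L y a) x :=
    ((hasDerivAt_log_quadratic (quadratic_pos hp x).ne').continuousAt.const_mul _).add
      ((hasDerivAt_log_quadratic (quadratic_pos hq x).ne').continuousAt.const_mul _)
  exact hL.sub ((continuousAt_digamma (neg_lt_iff_pos_add.1 hx)).comp (f := (· + 1)) (by fun_prop))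

lemma c₀_le_of_forall_digammaGap_le (ha : 4 / 15 < a) {c : ℝ}
    (hc : ∀ x, 0 < x → digammaGap a x ≤ c) : c₀ a ≤ c := by
  rw [← digammaGap_zero]
  have hlim : Tendsto (digammaGap a) (𝓝[>] 0) (𝓝 (digammaGap a 0)) :=
    (continuousAt_digammaGap ha neg_one_lt_zero).tendsto.mono_left nhdsWithin_le_nhds
  exact le_of_tendsto hlim (eventually_mem_nhdsWithin.mono hc)

end Gap

lemma threshold_le_iff {a : ℝ} (ha : 0 < a) :
    (40 + 3 * Real.sqrt 205) / 105 ≤ a ↔ 0 ≤ 315 * a ^ 2 - 240 * a - 7 := by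
  have hsqrt : 14 < Real.sqrt 205 := Real.lt_sqrt_of_sq_lt (by norm_num)
  have hfactor : 315 * a ^ 2 - 240 * a - 7 =
      315 * (a - (40 + 3 * Real.sqrt 205) / 105) * (a - (40 - 3 * Real.sqrt 205) / 105) := by
    linear_combination (9 / 35 : ℝ) * Real.sq_sqrt (by norm_num : (0 : ℝ) ≤ 205)
  have hroot : 0 < a - (40 - 3 * Real.sqrt 205) / 105 := by linarith
  rw [hfactor, mul_nonneg_iff_of_pos_right hroot, mul_nonneg_iff_of_pos_left (by norm_num),
    sub_nonneg]

theorem stmt_11_general :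
    (∀ a : ℝ, 0 < a →
      ((∀ x : ℝ, -1 < x → digamma (x + 1) < L x a) ↔ (40 + 3 * Real.sqrt 205) / 105 ≤ a)) ∧
    (∀ a : ℝ, (40 + 3 * Real.sqrt 205) / 105 ≤ a →
      (∀ x : ℝ, 0 < x → L x a - c₀ a < digamma (x + 1) ∧ digamma (x + 1) < L x a) ∧
      (∀ c : ℝ, (∀ x : ℝ, 0 < x → L x a - c < digamma (x + 1)) → c₀ a ≤ c)) := by
  refine ⟨fun a ha => ?_, fun a hthreshold => ?_⟩
  · rw [threshold_le_iff ha]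
    refine ⟨fun h => ?_, fun hslope x hx => sub_pos.1 (digammaGap_pos ha hslope hx)⟩
    by_contra! hslope
    obtain ⟨x, hneg, hx⟩ :=
      ((eventually_digammaGap_neg ha hslope).and (eventually_gt_atTop (-1))).exists
    exact (sub_neg.1 hneg).not_gt (h x hx)
  · have ha : 0 < a := by linarith [Real.sqrt_nonneg 205]
    have hslope := (threshold_le_iff ha).1 hthreshold
    refine ⟨fun x hx => ⟨?_, ?_⟩, fun c hc => ?_⟩
    · exact sub_lt_comm.1 (digammaGap_lt_c₀ ha hslope hx)
    · exact sub_pos.1 (digammaGap_pos ha hslope (neg_one_lt_zero.trans hx))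
    · exact c₀_le_of_forall_digammaGap_le (four_div_fifteen_lt_of_slope_nonneg ha hslope)
        fun x hx => (sub_lt_comm.1 (hc x hx)).le

/-- For a > 4/15, ψ(x+1) < L(x,a) holds for all x > −1 iff a ≥ a₁ = (40+3√205)/105.
Moreover for a ≥ a₁ and x > 0 one has L(x,a) − c₀(a) < ψ(x+1) < L(x,a), and c₀(a) is the
smallest constant for which the lower bound holds. -/
theorem stmt_11 :
    (∀ a : ℝ, 4 / 15 < a →
      ((∀ x : ℝ, -1 < x → digamma (x + 1) < L x a) ↔ (40 + 3 * Real.sqrt 205) / 105 ≤ a)) ∧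
    (∀ a : ℝ, (40 + 3 * Real.sqrt 205) / 105 ≤ a →
      (∀ x : ℝ, 0 < x → L x a - c₀ a < digamma (x + 1) ∧ digamma (x + 1) < L x a) ∧
      (∀ c : ℝ, (∀ x : ℝ, 0 < x → L x a - c < digamma (x + 1)) → c₀ a ≤ c)) :=
  ⟨fun a ha => stmt_11_general.1 a (by linarith), stmt_11_general.2⟩
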